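/- Let f : X → Y be a map between two metric spaces and let C₀, C₁, C₂, … be closed subsets of X. Suppose that: (1) X = ⋃ᵢ Cᵢ; (2) C₀ ∩ Cᵢ ≠ ∅ for all i; (3) diam(Cᵢ) → 0 as i → ∞; (4) diam(f(Cᵢ)) → 0 as i → ∞; and (5) the restriction of f to each Cᵢ is continuous. Then f is continuous. -/

import Mathlib

/-!
It suffices to prove `f → f x` along each ultrafilter `U` converging to `x`. Choose for every
`y` an index `i y` with `y ∈ C (i y)`. Along `U`, either `i` is constant, and continuity of `f` on
one closed `C j` is enough, or `i` leaves every finite set. In the second case, put `S = C 0`: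
points `p y ∈ S ∩ C (i y)` are asymptotically equal to `y`, so they converge to `x` inside `S`,
whence `f (p y) → f x`; and `f (p y)` is asymptotically equal to `f y`.
-/

open Set Filter Topology

open scoped Uniformity

lemma continuousWithinAt_of_continuousOn_of_isClosed {X Y : Type*} [TopologicalSpace X]
    [TopologicalSpace Y] {f : X → Y} {s : Set X} (hf : ContinuousOn f s) (hs : IsClosed s)
    (x : X) : ContinuousWithinAt f s x := by
  by_cases hx : x ∈ s
  · exact hf x hx
  · exact continuousWithinAt_of_notMem_closure (hs.closure_eq.symm ▸ hx)

lemma ultrafilter_eventually_eq_or_tendsto_cofinite {α ι : Type*} (U : Ultrafilter α)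
    (i : α → ι) : (∃ j, ∀ᶠ a in (U : Filter α), i a = j) ∨ Tendsto i U cofinite := by
  rcases (U.map i).le_cofinite_or_eq_pure with hcofinite | ⟨j, hj⟩
  · exact .inr hcofinite
  · have hmem : {j} ∈ U.map i := hj ▸ Ultrafilter.mem_pure.2 (mem_singleton j)
    exact .inl ⟨j, hmem⟩

lemma tendsto_prod_self_smallSets_uniformity_of_ediam {X ι : Type*} [PseudoEMetricSpace X]
    {l : Filter ι} {s : ι → Set X} (h : Tendsto (fun i => Metric.ediam (s i)) l (𝓝 0)) :
    Tendsto (fun i => s i ×ˢ s i) l (𝓤 X).smallSets := by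
  refine uniformity_basis_edist.smallSets.tendsto_right_iff.2 fun ε hε => ?_
  filter_upwards [h.eventually_lt_const hε] with i hi
  rintro ⟨a, b⟩ ⟨ha, hb⟩
  exact (Metric.edist_le_ediam_of_mem ha hb).trans_lt hi

lemma tendsto_comp_of_continuousWithinAt_of_smallSets {X Y α : Type*} [UniformSpace X]
    [UniformSpace Y] {f : X → Y} {S : Set X} {x : X} (hf : ContinuousWithinAt f S x)
    {l : Filter α} {u : α → X} (hu : Tendsto u l (𝓝 x)) {T : α → Set X}
    (huT : ∀ a, u a ∈ T a) (hST : ∀ a, (S ∩ T a).Nonempty)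
    (hT : Tendsto (fun a => T a ×ˢ T a) l (𝓤 X).smallSets)
    (hfT : Tendsto (fun a => (f '' T a) ×ˢ (f '' T a)) l (𝓤 Y).smallSets) :
    Tendsto (fun a => f (u a)) l (𝓝 (f x)) := by
  choose p hpS hpT using hST
  have hup : Tendsto (fun a => (u a, p a)) l (𝓤 X) :=
    hT.of_smallSets (.of_forall fun a => ⟨huT a, hpT a⟩)
  have hfpu : Tendsto (fun a => (f (p a), f (u a))) l (𝓤 Y) :=
    hfT.of_smallSets
      (.of_forall fun a => ⟨mem_image_of_mem f (hpT a), mem_image_of_mem f (huT a)⟩)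
  have hp : Tendsto p l (𝓝[S] x) :=
    tendsto_nhdsWithin_iff.2 ⟨hu.congr_uniformity hup, .of_forall hpS⟩
  exact (hf.tendsto.comp hp).congr_uniformity hfpu

theorem stmt5_general {X Y ι : Type*} [UniformSpace X] [UniformSpace Y] {f : X → Y}
    {S : Set X} (hS : IsClosed S) (hfS : ContinuousOn f S) {C : ι → Set X}
    (hclosed : ∀ i, IsClosed (C i)) (hunion : (⋃ i, C i) = univ)
    (hmeet : ∀ i, (S ∩ C i).Nonempty)
    (hsmall : Tendsto (fun i => C i ×ˢ C i) cofinite (𝓤 X).smallSets)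
    (hsmallf : Tendsto (fun i => (f '' C i) ×ˢ (f '' C i)) cofinite (𝓤 Y).smallSets)
    (hcont : ∀ i, ContinuousOn f (C i)) :
    Continuous f := by
  refine continuous_iff_ultrafilter.2 fun x U hU => ?_
  choose i hi using iUnion_eq_univ_iff.1 hunion
  rcases ultrafilter_eventually_eq_or_tendsto_cofinite U i with ⟨j, hj⟩ | hcofinite
  · have hCj : ∀ᶠ y in (U : Filter X), y ∈ C j := hj.mono fun y hy => hy ▸ hi y
    exact (continuousWithinAt_of_continuousOn_of_isClosed (hcont j) (hclosed j) x).tendsto.mono_left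
      (le_inf hU (le_principal_iff.2 hCj))
  · exact tendsto_comp_of_continuousWithinAt_of_smallSets
      (continuousWithinAt_of_continuousOn_of_isClosed hfS hS x) hU hi (fun y => hmeet (i y))
      (hsmall.comp hcofinite) (hsmallf.comp hcofinite)

theorem stmt5 {X Y : Type*} [MetricSpace X] [MetricSpace Y]
    (f : X → Y) (C : ℕ → Set X)
    (hclosed : ∀ i, IsClosed (C i))
    (hunion : (⋃ i, C i) = Set.univ)
    (hmeet : ∀ i, (C 0 ∩ C i).Nonempty)
    (hdiam : Tendsto (fun i => EMetric.diam (C i)) atTop (𝓝 0))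
    (hdiamf : Tendsto (fun i => EMetric.diam (f '' C i)) atTop (𝓝 0))
    (hcont : ∀ i, ContinuousOn f (C i)) :
    Continuous f := by
  rw [← Nat.cofinite_eq_atTop] at hdiam hdiamf
  exact stmt5_general (hclosed 0) (hcont 0) hclosed hunion hmeet
    (tendsto_prod_self_smallSets_uniformity_of_ediam hdiam)
    (tendsto_prod_self_smallSets_uniformity_of_ediam hdiamf) hcont
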